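/- In every Hubbard tree (T,f): the critical value c₁ = f(c₀) is an endpoint of T; the critical point c₀ has at most two arms (T \ {c₀} has at most two connected components); every branch point of T is periodic or preperiodic under f; no iterated image of a branch point equals c₀; the number of arms is constant along the periodic part of the orbit of any branch point; and every arc in T that does not contain c₀ in its interior is mapped by f homeomorphically onto its image. -/

import Mathlib

/- Common definitions for formalizing "Admissibility of kneading sequences and
structure of Hubbard trees for quadratic polynomials" by Bruin–Schleicher. -/

namespace HubbardTrees

/-- The symbols `0`, `1`, `*` used for itineraries and kneading sequences. -/
inductive Sym : Type
  | zero : Sym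
  | one : Sym
  | star : Sym
deriving DecidableEq

/-- `A` is an arc in `X` joining `x` and `y` (a point if `x = y`, otherwise a
homeomorphic image of `[0,1]` with endpoints `x` and `y`). -/
def IsArcBetween {X : Type*} [TopologicalSpace X] (A : Set X) (x y : X) : Prop :=
  (x = y ∧ A = {x}) ∨
  (x ≠ y ∧ ∃ γ : Path x y, Topology.IsEmbedding ⇑γ ∧ Set.range ⇑γ = A)

/-- The global arms at `x`: the connected components of `X \ {x}`. -/
def arms {X : Type*} [TopologicalSpace X] (x : X) : Set (Set X) :=
  {C | ∃ y, y ≠ x ∧ C = connectedComponentIn {x}ᶜ y}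

/-- The global arm at `x` containing `y` (for `y ≠ x`): the component of `X \ {x}`
containing `y`.  Local arms at `x` being germs of global arms, we represent the local
arm at `x` pointing towards `y` by this set. -/
def armTo {X : Type*} [TopologicalSpace X] (x y : X) : Set X :=
  connectedComponentIn {x}ᶜ y

/-- `x` is an endpoint: it has exactly one arm. -/
def IsEndpoint {X : Type*} [TopologicalSpace X] (x : X) : Prop :=
  (arms x).ncard = 1

/-- `x` is a branch point: it has at least three arms. -/
def IsBranchPt {X : Type*} [TopologicalSpace X] (x : X) : Prop :=
  3 ≤ (arms x).ncard

/-- `f` maps the set `A` homeomorphically onto its image. -/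
def MapsHomeoOn {X : Type*} [TopologicalSpace X] (f : X → X) (A : Set X) : Prop :=
  Topology.IsEmbedding (A.restrict f)

/-- `f` is a local homeomorphism onto its image at `x`. -/
def IsLocalHomeoAt {X : Type*} [TopologicalSpace X] (f : X → X) (x : X) : Prop :=
  ∃ U : Set X, IsOpen U ∧ x ∈ U ∧ Topology.IsEmbedding (U.restrict f)

/-- `g` sends the local arm at `x` represented by the global arm `C` to the local
arm at `g x` represented by `C'` (germ condition: some initial piece of `C` at `x`
is mapped into `C'`). -/
def MapsLocalArm {X : Type*} [TopologicalSpace X] (g : X → X) (x : X) (C C' : Set X) : Prop :=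
  C ∈ arms x ∧ C' ∈ arms (g x) ∧ ∃ U ∈ nhds x, g '' (C ∩ U) ⊆ C'

/-- `z` is periodic under `f` with exact period `n`. -/
def ExactPeriod {Y : Type*} (f : Y → Y) (z : Y) (n : ℕ) : Prop :=
  1 ≤ n ∧ f^[n] z = z ∧ ∀ k, 1 ≤ k → k < n → f^[k] z ≠ z

/-- The first return map `f^[n]` of the fixed point `z` of `f^[n]` permutes all the
local arms at `z` transitively in a single cycle. -/
def ArmsTransitive {X : Type*} [TopologicalSpace X] (f : X → X) (n : ℕ) (z : X) : Prop :=
  ∀ C ∈ arms z, ∀ C' ∈ arms z, ∃ j : ℕ, MapsLocalArm (f^[n * j]) z C C'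

/-- An (abstract) Hubbard tree: a finite topological tree `X` together with a
continuous surjection `f` and a critical point `c0`, subject to the axioms of
Bruin–Schleicher. -/
structure HubbardTree (X : Type*) [TopologicalSpace X] : Type _ where
  /-- the dynamics -/
  f : X → X
  /-- the critical point -/
  c0 : X
  compact : CompactSpace X
  t2 : T2Space X
  conn : ConnectedSpace X
  /-- the unique arc `[x,y]` joining two points -/
  arc : X → X → Set X
  arc_isArc : ∀ x y : X, IsArcBetween (arc x y) x y
  arc_unique : ∀ (x y : X) (A : Set X), IsArcBetween A x y → A = arc x y
  -- finiteness of the tree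
  arms_finite : ∀ x : X, (arms x).Finite
  branch_finite : Set.Finite {x : X | IsBranchPt x}
  endpoint_finite : Set.Finite {x : X | IsEndpoint x}
  cont : Continuous f
  surj : Function.Surjective f
  /-- every point has at most two inverse images -/
  two_preimages : ∀ y : X, ∃ a b : X, f ⁻¹' {y} ⊆ {a, b}
  /-- local homeomorphism onto its image away from the critical point -/
  local_homeo : ∀ x : X, x ≠ c0 → IsLocalHomeoAt f x
  /-- all endpoints lie on the critical orbit -/
  endpoints_on_orbit : ∀ x : X, IsEndpoint x → ∃ k : ℕ, f^[k] c0 = x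
  /-- the critical point is periodic or preperiodic -/
  crit_preperiodic : ∃ k n : ℕ, 1 ≤ n ∧ f^[k + n] c0 = f^[k] c0
  /-- the critical point is not fixed -/
  crit_not_fixed : f c0 ≠ c0
  /-- expansivity -/
  expansive : ∀ x y : X, x ≠ y →
    (IsBranchPt x ∨ ∃ k : ℕ, f^[k] c0 = x) →
    (IsBranchPt y ∨ ∃ k : ℕ, f^[k] c0 = y) →
    ∃ n : ℕ, c0 ∈ f^[n] '' (arc x y)

namespace HubbardTree

variable {X : Type*} [TopologicalSpace X] (H : HubbardTree X)

/-- The critical value `c₁ = f(c₀)`. -/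
def c1 : X := H.f H.c0

/-- The component `T₁` of `T \ {c₀}` containing the critical value. -/
def T1 : Set X := connectedComponentIn {H.c0}ᶜ H.c1

open Classical in
/-- The symbol (`0`, `1` or `*`) attached to a point of the tree. -/
noncomputable def symOf (x : X) : Sym :=
  if x = H.c0 then Sym.star else if x ∈ H.T1 then Sym.one else Sym.zero

/-- The itinerary of `x`: a sequence of symbols, 1-indexed (the value at index `0`
is irrelevant); entry `k ≥ 1` is the symbol of `f^[k-1] x`. -/
noncomputable def itin (x : X) : ℕ → Sym :=
  fun k => H.symOf (H.f^[k - 1] x)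

/-- The kneading sequence: the itinerary of the critical value (1-indexed). -/
noncomputable def kneading : ℕ → Sym := H.itin H.c1

/-- `z` is the characteristic point of its periodic orbit: `c₁` lies in one
component of `X \ {z}` while `c₀` and all other points of the orbit lie in a
different component. -/
def IsCharacteristic (z : X) : Prop :=
  ∃ Cv Cz : Set X, Cv ∈ arms z ∧ Cz ∈ arms z ∧ Cv ≠ Cz ∧
    H.c1 ∈ Cv ∧ H.c0 ∈ Cz ∧ ∀ k : ℕ, H.f^[k] z ≠ z → H.f^[k] z ∈ Cz

/-- The first return map fixes the local arm at `z` pointing to the critical point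
and permutes all other local arms transitively in a single cycle. -/
def OtherArmsTransitive (n : ℕ) (z : X) : Prop :=
  ∀ C ∈ arms z, C ≠ armTo z H.c0 → ∀ C' ∈ arms z, C' ≠ armTo z H.c0 →
    ∃ j : ℕ, MapsLocalArm (H.f^[n * j]) z C C'

/-- `z` is the characteristic point of an evil periodic orbit of branch points of
exact period `n`. -/
def IsEvilOrbit (z : X) (n : ℕ) : Prop :=
  ExactPeriod H.f z n ∧ (∀ k : ℕ, IsBranchPt (H.f^[k] z)) ∧
    H.IsCharacteristic z ∧ ¬ ArmsTransitive H.f n z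

/-- `x` is precritical with `Step(x) = k`: `k ≥ 1` is minimal with `f^[k] x = c₁`. -/
def Step (x : X) (k : ℕ) : Prop :=
  1 ≤ k ∧ H.f^[k] x = H.c1 ∧ ∀ j, 1 ≤ j → j < k → H.f^[j] x ≠ H.c1

/-- `x` is the closest precritical point `ζ_k`. -/
def IsClosestPrecritical (x : X) (k : ℕ) : Prop :=
  H.Step x k ∧ ∀ j, 1 ≤ j → j < k → H.c1 ∉ H.f^[j] '' (H.arc H.c1 x)

/-- `x` is the earliest precritical point on the set `A`, with `Step(x) = k`:
it is a precritical point on `A` of minimal Step. -/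
def IsEarliestPrecriticalOn (A : Set X) (x : X) (k : ℕ) : Prop :=
  x ∈ A ∧ H.Step x k ∧ ∀ y ∈ A, ∀ j : ℕ, H.Step y j → k ≤ j

/-- Marked points: branch points and points of the critical orbit. -/
def MarkedPt (x : X) : Prop :=
  IsBranchPt x ∨ ∃ k : ℕ, H.f^[k] H.c0 = x

/-- Two marked points are joined by an edge if the arc between them contains no
further marked point. -/
def IsEdge (x y : X) : Prop :=
  H.MarkedPt x ∧ H.MarkedPt y ∧ x ≠ y ∧
    ∀ w ∈ H.arc x y, H.MarkedPt w → w = x ∨ w = y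

/-- Equivalence of Hubbard trees: a bijection between the marked points which
conjugates the dynamics and preserves edges. -/
def Equivalent {Y : Type*} [TopologicalSpace Y] (H' : HubbardTree Y) : Prop :=
  ∃ φ : X → Y,
    (∀ x : X, H.MarkedPt x → H'.MarkedPt (φ x)) ∧
    (∀ x x' : X, H.MarkedPt x → H.MarkedPt x' → φ x = φ x' → x = x') ∧
    (∀ y : Y, H'.MarkedPt y → ∃ x : X, H.MarkedPt x ∧ φ x = y) ∧
    φ H.c0 = H'.c0 ∧
    (∀ x : X, H.MarkedPt x → φ (H.f x) = H'.f (φ x)) ∧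
    (∀ x x' : X, H.MarkedPt x → H.MarkedPt x' →
      (H.IsEdge x x' ↔ H'.IsEdge (φ x) (φ x')))

end HubbardTree

/-! ### Combinatorics of kneading sequences -/

/-- The function `ρ_ν(n) = inf { k > n : ν_k ≠ ν_{k-n} } ∈ ℕ ∪ {∞}` (sequences are
1-indexed). -/
noncomputable def rho (ν : ℕ → Sym) (n : ℕ) : ℕ∞ :=
  sInf {e : ℕ∞ | ∃ j : ℕ, e = (j : ℕ∞) ∧ n < j ∧ ν j ≠ ν (j - n)}

/-- `RhoOrbit ν k m` means that `m` belongs to the `ρ`-orbit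
`k → ρ(k) → ρ(ρ(k)) → ⋯` of `k` (stopped before reaching `∞`). -/
inductive RhoOrbit (ν : ℕ → Sym) : ℕ → ℕ → Prop
  | refl (k : ℕ) : RhoOrbit ν k k
  | step {k m j : ℕ} : RhoOrbit ν k m → rho ν m = (j : ℕ∞) → RhoOrbit ν k j

/-- `m` occurs in the internal address `1 → ρ(1) → ρ(ρ(1)) → ⋯` of `ν`. -/
def InternalAddress (ν : ℕ → Sym) (m : ℕ) : Prop := RhoOrbit ν 1 m

/-- `ν` is a `*`-periodic kneading sequence of (exact) period `n`:
`ν = overline(1 ν₂ … ν_{n-1} *)`. -/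
def StarPeriodic (ν : ℕ → Sym) (n : ℕ) : Prop :=
  2 ≤ n ∧ ν 1 = Sym.one ∧ ν n = Sym.star ∧
    (∀ k, 1 ≤ k → ν (k + n) = ν k) ∧
    (∀ k, 1 ≤ k → k < n → ν k ≠ Sym.star)

/-- `ν` fails the admissibility condition for period `m`. -/
def FailsAdmissibility (ν : ℕ → Sym) (m : ℕ) : Prop :=
  1 ≤ m ∧
  ¬ InternalAddress ν m ∧
  (∀ k : ℕ, k ∣ m → 1 ≤ k → k < m → rho ν k ≤ (m : ℕ∞)) ∧
  ∃ R r : ℕ, rho ν m = (R : ℕ∞) ∧ 1 ≤ r ∧ r ≤ m ∧ r ≡ R [MOD m] ∧ RhoOrbit ν r m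

open Classical in
/-- The number `q(m)` of arms predicted by the kneading sequence, where
`ρ(m) = R < ∞` and `r ∈ {1,…,m}` is congruent to `R` modulo `m`. -/
noncomputable def qArms (ν : ℕ → Sym) (m R r : ℕ) : ℕ :=
  if RhoOrbit ν r m then (R - r) / m + 1 else (R - r) / m + 2


/-! ### Embeddings into the plane and cyclic order of arms -/

/-- Three points in the plane are in (strictly) counterclockwise position. -/
def Ccw (p q r : ℝ × ℝ) : Prop :=
  0 < (q.1 - p.1) * (r.2 - p.2) - (q.2 - p.2) * (r.1 - p.1)

namespace HubbardTree

variable {X : Type*} [TopologicalSpace X] (H : HubbardTree X)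

/-- Under an embedding `φ` of the tree into the plane, `p` is a first exit point of
the arm `C` at `x` through the circle of radius `ε` around `φ x`: `p = φ y` for a
point `y ∈ C` at distance exactly `ε`, such that the arc from `x` to `y` stays
within distance `< ε` before reaching `y`. -/
def ExitPt (φ : X → ℝ × ℝ) (x : X) (C : Set X) (ε : ℝ) (p : ℝ × ℝ) : Prop :=
  ∃ y ∈ C, φ y = p ∧ dist (φ x) p = ε ∧
    ∀ z ∈ H.arc x y, z ≠ y → dist (φ x) (φ z) < ε

/-- The local arms at `x` represented by the arms `C, C', C''` are in
counterclockwise cyclic order under the embedding `φ`. -/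
def ArmsCcw (φ : X → ℝ × ℝ) (x : X) (C C' C'' : Set X) : Prop :=
  ∃ ε₀ : ℝ, 0 < ε₀ ∧ ∀ ε : ℝ, 0 < ε → ε < ε₀ →
    ∀ p p' p'' : ℝ × ℝ, H.ExitPt φ x C ε p → H.ExitPt φ x C' ε p' →
      H.ExitPt φ x C'' ε p'' → Ccw p p' p''

/-- `f` respects the cyclic order (induced by the embedding `φ`) of the local arms
at all branch points. -/
def RespectsCyclicOrder (φ : X → ℝ × ℝ) : Prop :=
  ∀ x : X, IsBranchPt x →
    ∀ C C' C'' : Set X, C ∈ arms x → C' ∈ arms x → C'' ∈ arms x →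
      C ≠ C' → C' ≠ C'' → C ≠ C'' → H.ArmsCcw φ x C C' C'' →
      ∀ D D' D'' : Set X, MapsLocalArm H.f x C D → MapsLocalArm H.f x C' D' →
        MapsLocalArm H.f x C'' D'' → H.ArmsCcw φ (H.f x) D D' D''

/-- The Hubbard tree can be topologically embedded into the plane `ℝ²` so that `f`
respects the cyclic order of the local arms at all branch points. -/
def PlanarEmbeddable : Prop :=
  ∃ φ : X → ℝ × ℝ, Topology.IsEmbedding φ ∧ H.RespectsCyclicOrder φ

end HubbardTree


section Aux

open Set Topology

variable {X : Type*} [TopologicalSpace X]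

namespace HubbardTree

theorem aux_arc_image (H : HubbardTree X) (g : ℝ → X) {a b : ℝ} (hab : a ≤ b)
    (hc : ContinuousOn g (Icc a b)) (hi : InjOn g (Icc a b)) :
    g '' Icc a b = H.arc (g a) (g b) := by
  have := H.t2
  apply H.arc_unique
  rcases hab.eq_or_lt with h | h
  · subst h
    left; simp
  · right
    have hne : g a ≠ g b := fun e => h.ne (hi (left_mem_Icc.2 hab) (right_mem_Icc.2 hab) e)
    refine ⟨hne, ?_⟩
    have hd : 0 < b - a := sub_pos.2 h
    have hm : ∀ t : unitInterval, a + (t : ℝ) * (b - a) ∈ Icc a b := by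
      intro t
      have h0 := t.2.1
      have h1 := t.2.2
      constructor <;> nlinarith
    have hcont : Continuous (fun t : unitInterval => g (a + (t : ℝ) * (b - a))) :=
      hc.comp_continuous (by fun_prop) hm
    refine ⟨⟨⟨fun t => g (a + (t : ℝ) * (b - a)), hcont⟩, by simp, by simp⟩, ?_, ?_⟩
    · refine (Continuous.isClosedEmbedding hcont ?_).isEmbedding
      intro s t e
      have := hi (hm s) (hm t) e
      apply Subtype.ext
      have h2 : (s : ℝ) * (b - a) = t * (b - a) := by linarith
      exact mul_right_cancel₀ hd.ne' h2
    · ext y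
      constructor
      · rintro ⟨t, rfl⟩
        exact ⟨_, hm t, rfl⟩
      · rintro ⟨s, hs, rfl⟩
        refine ⟨⟨(s - a) / (b - a), div_nonneg (by linarith [hs.1]) hd.le,
          (div_le_one hd).2 (by linarith [hs.2])⟩, ?_⟩
        change g (a + (s - a) / (b - a) * (b - a)) = g s
        congr 1
        field_simp
        ring

theorem aux_arc_param (H : HubbardTree X) {x y : X} (h : x ≠ y) :
    ∃ g : ℝ → X, Continuous g ∧ InjOn g (Icc 0 1) ∧ g 0 = x ∧ g 1 = y ∧
      g '' Icc 0 1 = H.arc x y := by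
  rcases H.arc_isArc x y with ⟨e, -⟩ | ⟨-, γ, hγ, hr⟩
  · exact absurd e h
  refine ⟨γ.extend, γ.continuous_extend, ?_, γ.extend_zero, γ.extend_one, ?_⟩
  · intro s hs t ht e
    rw [Path.extend_apply γ hs, Path.extend_apply γ ht] at e
    exact congrArg Subtype.val (hγ.injective e)
  · rw [← hr]
    ext z
    constructor
    · rintro ⟨s, hs, rfl⟩
      rw [Path.extend_apply γ hs]
      exact ⟨_, rfl⟩
    · rintro ⟨t, rfl⟩
      exact ⟨t, t.2, by rw [Path.extend_apply γ t.2]⟩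

theorem aux_arc_self (H : HubbardTree X) (x : X) : H.arc x x = {x} :=
  (H.arc_unique x x {x} (Or.inl ⟨rfl, rfl⟩)).symm

theorem aux_left_mem (H : HubbardTree X) (x y : X) : x ∈ H.arc x y := by
  by_cases h : x = y
  · subst h; simp [aux_arc_self]
  · obtain ⟨g, -, -, h0, -, hr⟩ := H.aux_arc_param h
    rw [← hr, ← h0]; exact ⟨0, by simp, rfl⟩

theorem aux_right_mem (H : HubbardTree X) (x y : X) : y ∈ H.arc x y := by
  by_cases h : x = y
  · subst h; simp [aux_arc_self]
  · obtain ⟨g, -, -, -, h1, hr⟩ := H.aux_arc_param h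
    rw [← hr, ← h1]; exact ⟨1, by simp, rfl⟩

theorem aux_arc_compact (H : HubbardTree X) (x y : X) : IsCompact (H.arc x y) := by
  by_cases h : x = y
  · subst h; simp [aux_arc_self]
  · obtain ⟨g, hc, -, -, -, hr⟩ := H.aux_arc_param h
    rw [← hr]; exact isCompact_Icc.image hc

theorem aux_arc_preconn (H : HubbardTree X) (x y : X) : IsPreconnected (H.arc x y) := by
  by_cases h : x = y
  · subst h; rw [aux_arc_self]; exact isPreconnected_singleton
  · obtain ⟨g, hc, -, -, -, hr⟩ := H.aux_arc_param h
    rw [← hr]; exact isPreconnected_Icc.image _ hc.continuousOn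

/-- all facts on a subarc issued from `c` -/
theorem aux_param_sub (H : HubbardTree X) {g : ℝ → X} (hc : Continuous g)
    (hi : InjOn g (Icc 0 1)) {s : ℝ} (hs : s ∈ Icc (0:ℝ) 1) :
    H.arc (g 0) (g s) = g '' Icc 0 s :=
  (H.aux_arc_image g hs.1 hc.continuousOn (hi.mono (Icc_subset_Icc_right hs.2))).symm

theorem aux_sub_arc (H : HubbardTree X) {c x q : X} (hq : q ∈ H.arc c x) :
    H.arc c q ⊆ H.arc c x := by
  by_cases h : c = x
  · subst h
    rw [aux_arc_self] at hq
    rw [mem_singleton_iff.1 hq]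
  · obtain ⟨g, hc, hi, rfl, rfl, hr⟩ := H.aux_arc_param h
    rw [← hr] at hq ⊢
    obtain ⟨s, hs, rfl⟩ := hq
    rw [H.aux_param_sub hc hi hs]
    exact image_mono (Icc_subset_Icc_right hs.2)

theorem aux_arc_total (H : HubbardTree X) {c y q r : X} (hq : q ∈ H.arc c y)
    (hr' : r ∈ H.arc c y) : q ∈ H.arc c r ∨ r ∈ H.arc c q := by
  by_cases h : c = y
  · subst h
    rw [aux_arc_self] at hq hr'
    rw [mem_singleton_iff.1 hq, mem_singleton_iff.1 hr', aux_arc_self]; simp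
  · obtain ⟨g, hc, hi, rfl, rfl, hr⟩ := H.aux_arc_param h
    rw [← hr] at hq hr'
    obtain ⟨s, hs, rfl⟩ := hq
    obtain ⟨t, ht, rfl⟩ := hr'
    rw [H.aux_param_sub hc hi hs, H.aux_param_sub hc hi ht]
    rcases le_total s t with h | h
    · exact Or.inl ⟨s, ⟨hs.1, h⟩, rfl⟩
    · exact Or.inr ⟨t, ⟨ht.1, h⟩, rfl⟩

theorem aux_armTo_eq (H : HubbardTree X) {c x q : X} (hq : q ∈ H.arc c x) (hqc : q ≠ c) :
    q ∈ armTo c x := by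
  by_cases h : c = x
  · subst h
    rw [aux_arc_self] at hq
    exact absurd hq hqc
  · obtain ⟨g, hc, hi, rfl, rfl, hr⟩ := H.aux_arc_param h
    rw [← hr] at hq
    obtain ⟨s, hs, rfl⟩ := hq
    have hs0 : 0 < s := lt_of_le_of_ne hs.1 (fun e => hqc (by rw [← e]))
    have hp : IsPreconnected (g '' Icc s 1) := isPreconnected_Icc.image _ hc.continuousOn
    refine hp.subset_connectedComponentIn ⟨1, ⟨hs.2, le_rfl⟩, rfl⟩ ?_ ⟨s, ⟨le_rfl, hs.2⟩, rfl⟩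
    rintro _ ⟨t, ht, rfl⟩ e
    have := hi ⟨hs.1.trans ht.1, ht.2⟩ (by simp) e
    linarith [ht.1]

theorem aux_mem_armTo {c x : X} (h : x ≠ c) : x ∈ armTo c x :=
  mem_connectedComponentIn h

theorem aux_armTo_mem {c x : X} (h : x ≠ c) : armTo c x ∈ arms c := ⟨x, h, rfl⟩

theorem aux_arm_eq {c x : X} {C : Set X} (hC : C ∈ arms c) (hx : x ∈ C) : C = armTo c x := by
  obtain ⟨y, hy, rfl⟩ := hC
  exact connectedComponentIn_eq hx

theorem aux_arm_ne {c x : X} {C : Set X} (hC : C ∈ arms c) (hx : x ∈ C) : x ≠ c := by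
  obtain ⟨y, hy, rfl⟩ := hC
  exact connectedComponentIn_subset _ _ hx

theorem aux_arm_nonempty {c : X} {C : Set X} (hC : C ∈ arms c) : C.Nonempty := by
  obtain ⟨y, hy, rfl⟩ := hC
  exact ⟨y, mem_connectedComponentIn hy⟩

theorem aux_arm_preconn {c : X} {C : Set X} (hC : C ∈ arms c) : IsPreconnected C := by
  obtain ⟨y, hy, rfl⟩ := hC
  exact isPreconnected_connectedComponentIn

theorem aux_closure_arm {c : X} {C : Set X} (hC : C ∈ arms c) : closure C ⊆ insert c C := by
  intro z hz
  by_cases h : z = c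
  · exact Or.inl h
  right
  obtain ⟨x, hx⟩ := aux_arm_nonempty hC
  have hp : IsPreconnected (insert z C) :=
    (aux_arm_preconn hC).subset_closure (subset_insert _ _)
      (insert_subset hz subset_closure)
  rw [aux_arm_eq hC hx]
  refine hp.subset_connectedComponentIn (Or.inr hx) ?_ (Or.inl rfl)
  rintro w (rfl | hw)
  · exact h
  · exact aux_arm_ne hC hw

theorem aux_insert_arm_closed (H : HubbardTree X) {c : X} {C : Set X} (hC : C ∈ arms c) :
    IsClosed (insert c C) := by
  have := H.t2
  have : insert c C = closure C ∪ {c} := by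
    apply Subset.antisymm
    · rintro w (rfl | hw)
      · right; rfl
      · left; exact subset_closure hw
    · rintro w (hw | rfl)
      · exact aux_closure_arm hC hw
      · left; rfl
  rw [this]
  exact isClosed_closure.union isClosed_singleton

theorem aux_arm_open (H : HubbardTree X) {c : X} {C : Set X} (hC : C ∈ arms c) :
    IsOpen C := by
  have := H.t2
  rw [← isClosed_compl_iff]
  have : Cᶜ = {c} ∪ ⋃ D ∈ arms c \ {C}, insert c D := by
    ext w
    constructor
    · intro hw
      by_cases h : w = c
      · left; exact h
      · right
        simp only [mem_iUnion]
        refine ⟨armTo c w, ⟨aux_armTo_mem h, ?_⟩, Or.inr (aux_mem_armTo h)⟩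
        intro e
        apply hw
        rw [← mem_singleton_iff.1 e]
        exact aux_mem_armTo h
    · intro hw hwC
      have hwc := aux_arm_ne hC hwC
      rcases hw with hw | hw
      · exact hwc hw
      · simp only [mem_iUnion] at hw
        obtain ⟨D, ⟨hD, hDC⟩, hwD⟩ := hw
        rcases hwD with h | h
        · exact hwc h
        · apply hDC
          rw [mem_singleton_iff, aux_arm_eq hD h, aux_arm_eq hC hwC]
  rw [this]
  exact isClosed_singleton.union (((H.arms_finite c).subset sdiff_subset).isClosed_biUnion
    (fun D hD => H.aux_insert_arm_closed hD.1))

theorem aux_insert_arm_preconn (H : HubbardTree X) {c : X} {C : Set X} (hC : C ∈ arms c) :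
    IsPreconnected (insert c C) := by
  have := H.conn
  refine (aux_arm_preconn hC).subset_closure (subset_insert _ _)
      (insert_subset ?_ subset_closure)
  by_contra h
  have hcl : IsClosed C := by
    rw [← closure_subset_iff_isClosed]
    intro z hz
    rcases aux_closure_arm hC hz with e | e
    · exact absurd (e ▸ hz) h
    · exact e
  have := IsClopen.eq_univ ⟨hcl, H.aux_arm_open hC⟩ (aux_arm_nonempty hC)
  have hc : c ∈ C := by rw [this]; trivial
  exact aux_arm_ne hC hc rfl

theorem aux_compl_arm_preconn (H : HubbardTree X) {c : X} {C : Set X} (hC : C ∈ arms c) :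
    IsPreconnected Cᶜ := by
  apply isPreconnected_of_forall c
  intro w hw
  by_cases h : w = c
  · subst h
    exact ⟨{w}, by simpa using hw, rfl, rfl, isPreconnected_singleton⟩
  · refine ⟨insert c (armTo c w), ?_, Or.inl rfl, Or.inr (aux_mem_armTo h),
      H.aux_insert_arm_preconn (aux_armTo_mem h)⟩
    rintro z (rfl | hz) hzC
    · exact aux_arm_ne hC hzC rfl
    · apply hw
      rw [aux_arm_eq hC hzC, ← aux_arm_eq (aux_armTo_mem h) hz]
      exact aux_mem_armTo h

theorem aux_arm_endpoint (H : HubbardTree X) {p : X} {C : Set X} (hC : C ∈ arms p) :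
    ∃ e ∈ C, IsEndpoint e := by
  have := H.t2
  have := H.compact
  have hne : ∀ {x}, x ∈ C → p ≠ x := fun hx => (aux_arm_ne hC hx).symm
  -- the sets `K x = (armTo x p)ᶜ`
  have hK1 : ∀ x ∈ C, (armTo x p)ᶜ ⊆ C := by
    intro x hx
    rw [compl_subset_comm]
    exact (H.aux_compl_arm_preconn hC).subset_connectedComponentIn
      (fun h => aux_arm_ne hC h rfl) (fun z hz e => hz (by rw [mem_singleton_iff.1 e]; exact hx))
  have hK2 : ∀ x ∈ C, ∀ z ∈ (armTo x p)ᶜ, (armTo z p)ᶜ ⊆ (armTo x p)ᶜ := by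
    intro x hx z hz
    rw [compl_subset_compl]
    exact (aux_arm_preconn (aux_armTo_mem (hne hx))).subset_connectedComponentIn
      (aux_mem_armTo (hne hx)) (fun w hw e => hz (by rw [← mem_singleton_iff.1 e]; exact hw))
  have hK3 : ∀ x ∈ C, x ∈ (armTo x p)ᶜ := fun x hx h =>
    aux_arm_ne (aux_armTo_mem (hne hx)) h rfl
  obtain ⟨M, hM⟩ := zorn_superset {K : Set X | ∃ x ∈ C, K = (armTo x p)ᶜ} (by
    intro c hcS hch
    rcases c.eq_empty_or_nonempty with rfl | hcn
    · obtain ⟨x, hx⟩ := aux_arm_nonempty hC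
      exact ⟨_, ⟨x, hx, rfl⟩, by simp⟩
    · have hn : (⋂₀ c).Nonempty := by
        have : Nonempty c := hcn.to_subtype
        apply IsCompact.nonempty_sInter_of_directed_nonempty_isCompact_isClosed
        · intro K hK L hL
          rcases hch.total hK hL with h | h
          · exact ⟨K, hK, Subset.rfl, h⟩
          · exact ⟨L, hL, h, Subset.rfl⟩
        · intro K hK
          obtain ⟨x, hx, rfl⟩ := hcS hK
          exact ⟨x, hK3 x hx⟩
        · intro K hK
          obtain ⟨x, hx, rfl⟩ := hcS hK
          exact (H.aux_arm_open (aux_armTo_mem (hne hx))).isClosed_compl.isCompact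
        · intro K hK
          obtain ⟨x, hx, rfl⟩ := hcS hK
          exact (H.aux_arm_open (aux_armTo_mem (hne hx))).isClosed_compl
      obtain ⟨z, hz⟩ := hn
      obtain ⟨K, hK⟩ := hcn
      have hzC : z ∈ C := by
        obtain ⟨x, hx, e⟩ := hcS hK
        exact hK1 x hx (e ▸ hz K hK)
      refine ⟨_, ⟨z, hzC, rfl⟩, ?_⟩
      intro L hL
      obtain ⟨x, hx, e⟩ := hcS hL
      rw [e]
      exact hK2 x hx z (e ▸ hz L hL))
  obtain ⟨x, hx, rfl⟩ := hM.prop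
  refine ⟨x, hx, ?_⟩
  unfold IsEndpoint
  rw [ncard_eq_one]
  refine ⟨armTo x p, ?_⟩
  apply Subset.antisymm
  · intro C' hC'
    by_contra hneq
    obtain ⟨w, hw⟩ := aux_arm_nonempty hC'
    have hwK : w ∈ (armTo x p)ᶜ := by
      intro h
      apply hneq
      rw [mem_singleton_iff, aux_arm_eq hC' hw, ← aux_arm_eq (aux_armTo_mem (hne hx)) h]
    have hwC := hK1 x hx hwK
    have hle := hM.le_of_le ⟨w, hwC, rfl⟩ (hK2 x hx w hwK)
    have hxw : x ∉ armTo w p := hle (hK3 x hx)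
    apply hxw
    refine (H.aux_compl_arm_preconn hC').subset_connectedComponentIn ?_ ?_ ?_
    · intro h
      apply hneq
      rw [mem_singleton_iff]
      exact aux_arm_eq hC' h
    · intro z hz e
      exact hz (by rw [mem_singleton_iff.1 e]; exact hw)
    · intro h
      exact aux_arm_ne hC' h rfl
  · rintro _ rfl
    exact aux_armTo_mem (hne hx)

theorem aux_cover (H : HubbardTree X) {c x : X} (hxc : x ≠ c) :
    ∃ e, IsEndpoint e ∧ x ∈ H.arc c e := by
  by_contra hcon
  push Not at hcon
  have h1 : ¬ IsEndpoint x := fun h => hcon x h (H.aux_right_mem c x)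
  apply h1
  unfold IsEndpoint
  rw [ncard_eq_one]
  refine ⟨armTo x c, Subset.antisymm ?_ ?_⟩
  · intro C hC
    obtain ⟨e, he, hee⟩ := H.aux_arm_endpoint hC
    have : e ∈ armTo x c := by
      refine (H.aux_arc_preconn c e).subset_connectedComponentIn (H.aux_left_mem c e) ?_
        (H.aux_right_mem c e)
      intro z hz e'
      exact hcon e hee (by rw [← mem_singleton_iff.1 e']; exact hz)
    rw [mem_singleton_iff, aux_arm_eq hC he, ← aux_arm_eq (aux_armTo_mem hxc.symm) this]
  · rintro _ rfl
    exact aux_armTo_mem hxc.symm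

theorem aux_meet (H : HubbardTree X) {c x y : X} (hx : x ≠ c)
    (h : y ∈ armTo c x) : ∃ q, q ≠ c ∧ q ∈ H.arc c x ∧ q ∈ H.arc c y := by
  have := H.t2
  have hy : y ≠ c := aux_arm_ne (aux_armTo_mem hx) h
  let R : X → X → Prop := fun a b => ∃ q, q ≠ c ∧ q ∈ H.arc c a ∧ q ∈ H.arc c b
  have hsymm : ∀ {a b}, R a b → R b a := fun ⟨q, h1, h2, h3⟩ => ⟨q, h1, h3, h2⟩
  have htrans : ∀ {a b d}, R a b → R b d → R a d := by
    rintro a b d ⟨q, hq, hqa, hqb⟩ ⟨r, hr, hrb, hrd⟩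
    rcases H.aux_arc_total hqb hrb with h | h
    · exact ⟨q, hq, hqa, H.aux_sub_arc hrd h⟩
    · exact ⟨r, hr, H.aux_sub_arc hqa h, hrd⟩
  have hmem : ∀ {a b}, a ≠ c → a ∈ H.arc c b → R a b := fun ha hab =>
    ⟨_, ha, H.aux_right_mem c _, hab⟩
  let A : Set X := ⋃ e ∈ {e | IsEndpoint e ∧ R e x}, H.arc c e
  let B : Set X := ⋃ e ∈ {e | IsEndpoint e ∧ ¬ R e x}, H.arc c e
  have hA : IsClosed A := (H.endpoint_finite.subset (fun e he => he.1)).isClosed_biUnion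
    (fun e _ => (H.aux_arc_compact c e).isClosed)
  have hB : IsClosed B := (H.endpoint_finite.subset (fun e he => he.1)).isClosed_biUnion
    (fun e _ => (H.aux_arc_compact c e).isClosed)
  have hcov : ∀ z, z ≠ c → (R z x → z ∈ A) ∧ (¬ R z x → z ∈ B) := by
    intro z hz
    obtain ⟨e, he, hze⟩ := H.aux_cover hz
    have hr := hmem hz hze
    constructor
    · intro hzx
      exact mem_biUnion (show e ∈ {e | IsEndpoint e ∧ R e x} from
        ⟨he, htrans (hsymm hr) hzx⟩) hze
    · intro hzx
      exact mem_biUnion (show e ∈ {e | IsEndpoint e ∧ ¬ R e x} from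
        ⟨he, fun hh => hzx (htrans hr hh)⟩) hze
  have hxA : x ∈ A := (hcov x hx).1 (hmem hx (H.aux_right_mem c x))
  by_contra hcon
  have hyB : y ∈ B := (hcov y hy).2 (fun hh => hcon (hsymm hh))
  have hp := aux_arm_preconn (aux_armTo_mem hx)
  rw [isPreconnected_closed_iff] at hp
  obtain ⟨z, hz, hzA, hzB⟩ := hp A B hA hB (by
    intro z hz
    have hzc := aux_arm_ne (aux_armTo_mem hx) hz
    by_cases hh : R z x
    · exact Or.inl ((hcov z hzc).1 hh)
    · exact Or.inr ((hcov z hzc).2 hh)) ⟨x, aux_mem_armTo hx, hxA⟩ ⟨y, h, hyB⟩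
  have hzc := aux_arm_ne (aux_armTo_mem hx) hz
  simp only [A, B, mem_iUnion] at hzA hzB
  obtain ⟨e, ⟨-, he⟩, hze⟩ := hzA
  obtain ⟨e', ⟨-, he'⟩, hze'⟩ := hzB
  exact he' (htrans (hsymm (hmem hzc hze')) (htrans (hmem hzc hze) he))

/-- no simple loops -/
theorem aux_no_loop (H : HubbardTree X) (g : ℝ → X) {s t : ℝ} (hst : s < t)
    (hc : ContinuousOn g (Icc s t)) (he : g s = g t) (h1 : InjOn g (Ico s t))
    (h2 : InjOn g (Ioc s t)) : False := by
  have hm1 : s < (s + t) / 2 := by linarith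
  have hm2 : (s + t) / 2 < t := by linarith
  have e1 := H.aux_arc_image g hm1.le (hc.mono (Icc_subset_Icc_right hm2.le))
    (h1.mono (show Icc s ((s + t) / 2) ⊆ Ico s t from
      fun z hz => ⟨hz.1, hz.2.trans_lt hm2⟩))
  have e2 := H.aux_arc_image (fun r => g (-r)) (neg_le_neg hm2.le)
    (hc.comp (f := fun r : ℝ => -r) (by fun_prop)
      (fun z hz => ⟨by linarith [hz.2], by linarith [hz.1]⟩))
    (fun a ha b hb hab => neg_injective (@h2 (-a)
      ⟨by linarith [ha.2], by linarith [ha.1]⟩ (-b) ⟨by linarith [hb.2], by linarith [hb.1]⟩ hab))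
  simp only [neg_neg] at e2
  rw [← he, ← e1] at e2
  have : g ((s + (s + t) / 2) / 2) ∈ g '' Icc s ((s + t) / 2) :=
    ⟨_, ⟨by linarith, by linarith⟩, rfl⟩
  rw [← e2] at this
  obtain ⟨r, hr, hre⟩ := this
  have := @h2 (-r)
    ⟨by linarith [hr.2], by linarith [hr.1]⟩ ((s + (s + t) / 2) / 2) ⟨by linarith, by linarith⟩ hre
  linarith [hr.2]

/-- A path which is locally injective on a closed interval is injective. -/
theorem aux_loc_inj (H : HubbardTree X) (g : ℝ → X) {a b : ℝ}
    (hc : ContinuousOn g (Icc a b))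
    (hl : ∀ t ∈ Icc a b, ∃ V, IsOpen V ∧ t ∈ V ∧ InjOn g (V ∩ Icc a b)) :
    InjOn g (Icc a b) := by
  have := H.t2
  by_contra hni
  -- the set of bad pairs
  let S : Set (ℝ × ℝ) := {p | p.1 ∈ Icc a b ∧ p.2 ∈ Icc a b ∧ p.1 < p.2 ∧ g p.1 = g p.2}
  have hS : S.Nonempty := by
    simp only [InjOn] at hni
    push Not at hni
    obtain ⟨s, hs, t, ht, e, hne⟩ := hni
    rcases lt_or_gt_of_ne hne with h | h
    · exact ⟨(s, t), hs, ht, h, e⟩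
    · exact ⟨(t, s), ht, hs, h, e.symm⟩
  have hcl : IsClosed S := by
    let E : Set (ℝ × ℝ) := {p | p ∈ Icc a b ×ˢ Icc a b ∧ g p.1 = g p.2}
    have hE : IsClosed E := by
      have hcE : ContinuousOn (fun p : ℝ × ℝ => (g p.1, g p.2)) (Icc a b ×ˢ Icc a b) :=
        (hc.comp continuousOn_fst (fun p hp => hp.1)).prodMk
          (hc.comp continuousOn_snd (fun p hp => hp.2))
      exact hcE.preimage_isClosed_of_isClosed (isClosed_Icc.prod isClosed_Icc)
        (isClosed_diagonal (X := X))
    rw [← isOpen_compl_iff, isOpen_iff_mem_nhds]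
    rintro ⟨s, t⟩ hp
    have hcase : (s, t) ∉ E ∨ t < s ∨ (s = t ∧ s ∈ Icc a b) := by
      by_contra hh
      push Not at hh
      obtain ⟨⟨⟨h1, h2⟩, h3⟩, h4, h5⟩ := hh
      exact hp ⟨h1, h2, lt_of_le_of_ne h4 (fun e => h5 e h1), h3⟩
    rcases hcase with h | h | ⟨rfl, h⟩
    · filter_upwards [hE.isOpen_compl.mem_nhds h] with p hp' hpS
      exact hp' ⟨⟨hpS.1, hpS.2.1⟩, hpS.2.2.2⟩
    · have : IsOpen {p : ℝ × ℝ | p.2 < p.1} := isOpen_lt continuous_snd continuous_fst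
      filter_upwards [this.mem_nhds h] with p hp' hpS
      exact lt_asymm hp' hpS.2.2.1
    · obtain ⟨V, hV, hsV, hinj⟩ := hl s h
      filter_upwards [(hV.prod hV).mem_nhds (show (s, s) ∈ V ×ˢ V from ⟨hsV, hsV⟩)] with p hp' hpS
      exact hpS.2.2.1.ne (hinj ⟨hp'.1, hpS.1⟩ ⟨hp'.2, hpS.2.1⟩ hpS.2.2.2)
  have hcomp : IsCompact S := (isCompact_Icc.prod isCompact_Icc).of_isClosed_subset hcl
    (fun p hp => (⟨hp.1, hp.2.1⟩ : p ∈ Icc a b ×ˢ Icc a b))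
  obtain ⟨⟨s, t⟩, ⟨hs, ht, hst, e⟩, hmin⟩ := hcomp.exists_isMinOn hS
    (f := fun p : ℝ × ℝ => p.2 - p.1) (by fun_prop)
  have hbad : ∀ u v, u ∈ Icc s t → v ∈ Icc s t → u < v → g u = g v → t - s ≤ v - u := by
    intro u v hu hv huv he
    exact hmin (show (u, v) ∈ S from ⟨⟨hs.1.trans hu.1, hu.2.trans ht.2⟩,
      ⟨hs.1.trans hv.1, hv.2.trans ht.2⟩, huv, he⟩)
  refine H.aux_no_loop g hst (hc.mono (Icc_subset_Icc hs.1 ht.2)) e ?_ ?_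
  · intro u hu v hv he
    rcases lt_trichotomy u v with h | h | h
    · have := hbad u v ⟨hu.1, hu.2.le⟩ ⟨hv.1, hv.2.le⟩ h he
      linarith [hu.1, hv.2]
    · exact h
    · have := hbad v u ⟨hv.1, hv.2.le⟩ ⟨hu.1, hu.2.le⟩ h he.symm
      linarith [hv.1, hu.2]
  · intro u hu v hv he
    rcases lt_trichotomy u v with h | h | h
    · have := hbad u v ⟨hu.1.le, hu.2⟩ ⟨hv.1.le, hv.2⟩ h he
      linarith [hu.1, hv.2]
    · exact h
    · have := hbad v u ⟨hv.1.le, hv.2⟩ ⟨hu.1.le, hu.2⟩ h he.symm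
      linarith [hv.1, hu.2]

/-- Continuous on `[0,1]` and locally injective on `(0,1)` implies injective on `[0,1]`. -/
theorem aux_inj_of_loc (H : HubbardTree X) (g : ℝ → X)
    (hc : Continuous g)
    (hl : ∀ t ∈ Ioo (0:ℝ) 1, ∃ V, IsOpen V ∧ t ∈ V ∧ InjOn g (V ∩ Icc 0 1)) :
    InjOn g (Icc 0 1) := by
  have key : ∀ s t, 0 < s → s < t → t < 1 → g s ≠ g t := by
    intro s t h0 hst h1 e
    have := H.aux_loc_inj g (a := s) (b := t) hc.continuousOn (fun u hu => by
      obtain ⟨V, hV, huV, hi⟩ := hl u ⟨h0.trans_le hu.1, hu.2.trans_lt h1⟩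
      exact ⟨V, hV, huV, hi.mono (inter_subset_inter_right _ (Icc_subset_Icc h0.le h1.le))⟩)
    exact hst.ne (this (left_mem_Icc.2 hst.le) (right_mem_Icc.2 hst.le) e)
  have inj_of : ∀ (A : Set ℝ), (∀ u ∈ A, ∀ v ∈ A, u < v → g u ≠ g v) → InjOn g A := by
    intro A hA u hu v hv e
    rcases lt_trichotomy u v with h | h | h
    · exact absurd e (hA u hu v hv h)
    · exact h
    · exact absurd e.symm (hA v hv u hu h)
  have k0 : ∀ t, 0 < t → t < 1 → g 0 ≠ g t := by
    intro t h0 h1 e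
    refine H.aux_no_loop g h0 hc.continuousOn e (inj_of _ ?_) (inj_of _ ?_)
    · intro u hu v hv huv huv'
      rcases hu.1.eq_or_lt with h | h
      · subst h
        exact key v t huv hv.2 h1 (huv'.symm.trans e)
      · exact key u v h huv (hv.2.trans h1) huv'
    · intro u hu v hv huv
      exact key u v hu.1 huv (hv.2.trans_lt h1)
  have k1 : ∀ t, 0 < t → t < 1 → g t ≠ g 1 := by
    intro t h0 h1 e
    refine H.aux_no_loop g h1 hc.continuousOn e (inj_of _ ?_) (inj_of _ ?_)
    · intro u hu v hv huv
      exact key u v (h0.trans_le hu.1) huv hv.2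
    · intro u hu v hv huv huv'
      rcases hv.2.eq_or_lt with h | h
      · subst h
        exact key t u h0 hu.1 huv (e.trans huv'.symm)
      · exact key u v (h0.trans hu.1) huv h huv'
  have k01 : g 0 ≠ g 1 := by
    intro e
    refine H.aux_no_loop g one_pos hc.continuousOn e (inj_of _ ?_) (inj_of _ ?_)
    · intro u hu v hv huv
      rcases hu.1.eq_or_lt with h | h
      · subst h; exact k0 v huv hv.2
      · exact key u v h huv hv.2
    · intro u hu v hv huv
      rcases hv.2.eq_or_lt with h | h
      · subst h; exact k1 u hu.1 huv
      · exact key u v hu.1 huv h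
  apply inj_of
  intro u hu v hv huv
  rcases hu.1.eq_or_lt with h | h
  · subst h
    rcases hv.2.eq_or_lt with h | h
    · subst h; exact k01
    · exact k0 v huv h
  · rcases hv.2.eq_or_lt with h' | h'
    · subst h'; exact k1 u h huv
    · exact key u v h huv h'

theorem aux_injOn_arc (H : HubbardTree X) {x y : X} (h0 : H.c0 ∉ H.arc x y \ {x, y}) :
    InjOn H.f (H.arc x y) := by
  by_cases h : x = y
  · subst h; rw [aux_arc_self]; simp
  obtain ⟨g, hc, hi, rfl, rfl, hr⟩ := H.aux_arc_param h
  rw [← hr] at h0 ⊢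
  have := H.aux_inj_of_loc (fun t => H.f (g t)) (H.cont.comp hc) (by
    intro t ht
    have htI : t ∈ Icc (0:ℝ) 1 := ⟨ht.1.le, ht.2.le⟩
    have hne : g t ≠ H.c0 := by
      intro e
      apply h0
      rw [← e]
      refine ⟨⟨t, htI, rfl⟩, ?_⟩
      rintro (h | h)
      · exact ht.1.ne' (hi htI (by simp) h)
      · exact ht.2.ne (hi htI (by simp) h)
    obtain ⟨U, hU, hgU, hemb⟩ := H.local_homeo _ hne
    refine ⟨g ⁻¹' U, hU.preimage hc, hgU, ?_⟩
    intro u hu v hv e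
    exact hi hu.2 hv.2 (injOn_iff_injective.2 hemb.injective hu.1 hv.1 e))
  rintro _ ⟨s, hs, rfl⟩ _ ⟨t, ht, rfl⟩ e
  exact congrArg g (this hs ht e)

theorem aux_image_arc (H : HubbardTree X) {x y : X} (hi : InjOn H.f (H.arc x y)) :
    H.arc (H.f x) (H.f y) = H.f '' H.arc x y := by
  by_cases h : x = y
  · subst h; simp [aux_arc_self]
  obtain ⟨g, hc, hgi, rfl, rfl, hr⟩ := H.aux_arc_param h
  rw [← hr] at hi ⊢
  rw [← H.aux_arc_image (fun t => H.f (g t)) zero_le_one (H.cont.comp hc).continuousOn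
    (fun s hs t ht e => hgi hs ht (hi ⟨s, hs, rfl⟩ ⟨t, ht, rfl⟩ e)), image_image]

theorem aux_small_arc (H : HubbardTree X) {x : X} {C U : Set X} (hC : C ∈ arms x)
    (hU : IsOpen U) (hx : x ∈ U) : ∃ y ∈ C, H.arc x y ⊆ U := by
  obtain ⟨z, hz⟩ := aux_arm_nonempty hC
  have hzx := aux_arm_ne hC hz
  have hCz := aux_arm_eq hC hz
  obtain ⟨g, hc, hgi, rfl, rfl, hr⟩ := H.aux_arc_param hzx.symm
  have hn : g ⁻¹' U ∈ 𝓝 (0:ℝ) := (hU.preimage hc).mem_nhds hx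
  obtain ⟨ε, hε, hb⟩ := Metric.mem_nhds_iff.1 hn
  have hd : 0 < min (ε / 2) 1 := by positivity
  have hI : min (ε / 2) 1 ∈ Icc (0:ℝ) 1 := ⟨hd.le, min_le_right _ _⟩
  refine ⟨g (min (ε / 2) 1), ?_, ?_⟩
  · rw [hCz]
    refine H.aux_armTo_eq ?_ ?_
    · rw [← hr]; exact ⟨_, hI, rfl⟩
    · intro e
      exact hd.ne' (hgi hI (by simp) e)
  · rw [H.aux_param_sub hc hgi hI]
    rintro _ ⟨t, ht, rfl⟩
    apply hb
    rw [Metric.mem_ball, Real.dist_eq, sub_zero, abs_of_nonneg ht.1]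
    have := min_le_left (ε / 2) 1
    linarith [ht.2]

theorem aux_arms_le (H : HubbardTree X) {x : X} (hx : x ≠ H.c0) :
    (arms x).ncard ≤ (arms (H.f x)).ncard := by
  obtain ⟨U, hU, hxU, hemb⟩ := H.local_homeo x hx
  have hinj : InjOn H.f U := injOn_iff_injective.2 hemb.injective
  have hch : ∀ C : Set X, ∃ y, C ∈ arms x → y ∈ C ∧ H.arc x y ⊆ U := by
    intro C
    by_cases hC : C ∈ arms x
    · obtain ⟨y, h1, h2⟩ := H.aux_small_arc hC hU hxU
      exact ⟨y, fun _ => ⟨h1, h2⟩⟩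
    · exact ⟨x, fun h => absurd h hC⟩
  choose y hy using hch
  have hfne : ∀ C ∈ arms x, H.f (y C) ≠ H.f x := by
    intro C hC e
    have := hinj ((hy C hC).2 (H.aux_right_mem _ _)) hxU e
    exact aux_arm_ne hC (hy C hC).1 this
  refine ncard_le_ncard_of_injOn (fun C => armTo (H.f x) (H.f (y C)))
    (fun C hC => aux_armTo_mem (hfne C hC)) ?_ (H.arms_finite _)
  intro C hC D hD e
  have hmem : H.f (y D) ∈ armTo (H.f x) (H.f (y C)) := by
    have e' : armTo (H.f x) (H.f (y C)) = armTo (H.f x) (H.f (y D)) := e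
    rw [e']; exact aux_mem_armTo (hfne D hD)
  obtain ⟨q, hq, hqC, hqD⟩ := H.aux_meet (hfne C hC) hmem
  rw [H.aux_image_arc (hinj.mono (hy C hC).2)] at hqC
  rw [H.aux_image_arc (hinj.mono (hy D hD).2)] at hqD
  obtain ⟨p, hp, rfl⟩ := hqC
  obtain ⟨p', hp', e'⟩ := hqD
  have hpp : p' = p := hinj ((hy D hD).2 hp') ((hy C hC).2 hp) e'
  subst hpp
  have hpx : p' ≠ x := fun e => hq (by rw [e])
  have h1 : p' ∈ C := by
    rw [aux_arm_eq hC (hy C hC).1]; exact H.aux_armTo_eq hp hpx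
  have h2 : p' ∈ D := by
    rw [aux_arm_eq hD (hy D hD).1]; exact H.aux_armTo_eq hp' hpx
  rw [aux_arm_eq hC h1, aux_arm_eq hD h2]

theorem aux_arms_pos (H : HubbardTree X) (x : X) : (arms x).Nonempty := by
  by_cases h : x = H.c0
  · exact ⟨_, aux_armTo_mem (x := H.f H.c0) (by rw [h]; exact H.crit_not_fixed)⟩
  · exact ⟨_, aux_armTo_mem (x := H.c0) (fun e => h e.symm)⟩

theorem aux_c1_endpoint (H : HubbardTree X) : IsEndpoint H.c1 := by
  classical
  have hex : ∃ k : ℕ, IsEndpoint (H.f^[k + 1] H.c0) := by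
    obtain ⟨C, hC⟩ := H.aux_arms_pos H.c0
    obtain ⟨e, heC, he⟩ := H.aux_arm_endpoint hC
    obtain ⟨k, hk⟩ := H.endpoints_on_orbit e he
    cases k with
    | zero => exact absurd hk.symm (aux_arm_ne hC heC)
    | succ k => exact ⟨k, hk ▸ he⟩
  have hsp := Nat.find_spec hex
  have hmin := fun m => Nat.find_min (H := hex) (m := m)
  revert hsp hmin
  generalize Nat.find hex = k
  intro hsp hmin
  cases k with
  | zero => exact hsp
  | succ k =>
    exfalso
    have h1 := hmin k (Nat.lt_succ_self k)
    rw [Function.iterate_succ_apply'] at hsp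
    by_cases hc : H.f^[k + 1] H.c0 = H.c0
    · rw [hc] at hsp
      exact hmin 0 (Nat.succ_pos k) hsp
    · have hle := H.aux_arms_le hc
      have hpos : 0 < (arms (H.f^[k + 1] H.c0)).ncard :=
        (ncard_pos (H.arms_finite _)).2 (H.aux_arms_pos _)
      unfold IsEndpoint at hsp h1
      omega

theorem aux_c0_arms (H : HubbardTree X) : (arms H.c0).ncard ≤ 2 := by
  by_contra hcon
  push Not at hcon
  obtain ⟨A, hA, B, hB, D, hD, hAB, hAD, hBD⟩ := (two_lt_ncard (H.arms_finite _)).1 hcon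
  have hinj : ∀ y, InjOn H.f (H.arc H.c0 y) := fun y =>
    H.aux_injOn_arc (fun h => h.2 (Or.inl rfl))
  obtain ⟨E, hE⟩ := ncard_eq_one.1 H.aux_c1_endpoint
  have hsame : ∀ u v, u ≠ H.c1 → v ≠ H.c1 → v ∈ armTo H.c1 u := by
    intro u v hu hv
    have h1 : armTo H.c1 u ∈ arms H.c1 := aux_armTo_mem hu
    have h2 : armTo H.c1 v ∈ arms H.c1 := aux_armTo_mem hv
    rw [hE, mem_singleton_iff] at h1 h2
    rw [h1, ← h2]
    exact aux_mem_armTo hv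
  have hfne : ∀ y, y ≠ H.c0 → H.f y ≠ H.c1 := by
    intro y hy e
    exact hy (hinj y (H.aux_right_mem _ _) (H.aux_left_mem _ _) e)
  have hlift : ∀ C ∈ arms H.c0, ∀ y ∈ C, ∀ q, q ≠ H.c1 → q ∈ H.arc H.c1 (H.f y) →
      ∃ p ∈ C, H.f p = q := by
    intro C hC y hy q hq hqa
    rw [show H.c1 = H.f H.c0 from rfl, H.aux_image_arc (hinj y)] at hqa
    obtain ⟨p, hp, rfl⟩ := hqa
    refine ⟨p, ?_, rfl⟩
    rw [aux_arm_eq hC hy]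
    exact H.aux_armTo_eq hp (fun e => hq (by rw [e]; rfl))
  obtain ⟨a, ha⟩ := aux_arm_nonempty hA
  obtain ⟨b, hb⟩ := aux_arm_nonempty hB
  obtain ⟨d, hd⟩ := aux_arm_nonempty hD
  have ha' := hfne a (aux_arm_ne hA ha)
  have hb' := hfne b (aux_arm_ne hB hb)
  have hd' := hfne d (aux_arm_ne hD hd)
  obtain ⟨m, hm, hma, hmb⟩ := H.aux_meet ha' (hsame _ _ ha' hb')
  obtain ⟨q, hq, hqm, hqd⟩ := H.aux_meet hm (hsame _ _ hm hd')
  obtain ⟨p₁, hp₁, e₁⟩ := hlift A hA a ha q hq (H.aux_sub_arc hma hqm)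
  obtain ⟨p₂, hp₂, e₂⟩ := hlift B hB b hb q hq (H.aux_sub_arc hmb hqm)
  obtain ⟨p₃, hp₃, e₃⟩ := hlift D hD d hd q hq hqd
  have n12 : p₁ ≠ p₂ := by
    rintro rfl; exact hAB (by rw [aux_arm_eq hA hp₁, aux_arm_eq hB hp₂])
  have n13 : p₁ ≠ p₃ := by
    rintro rfl; exact hAD (by rw [aux_arm_eq hA hp₁, aux_arm_eq hD hp₃])
  have n23 : p₂ ≠ p₃ := by
    rintro rfl; exact hBD (by rw [aux_arm_eq hB hp₂, aux_arm_eq hD hp₃])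
  obtain ⟨u, v, huv⟩ := H.two_preimages q
  have g1 := huv (show p₁ ∈ _ from e₁)
  have g2 := huv (show p₂ ∈ _ from e₂)
  have g3 := huv (show p₃ ∈ _ from e₃)
  simp only [mem_insert_iff, mem_singleton_iff] at g1 g2 g3
  grind

theorem aux_branch_ne (H : HubbardTree X) {x : X} (hx : IsBranchPt x) : x ≠ H.c0 := by
  rintro rfl
  have := H.aux_c0_arms
  unfold IsBranchPt at hx
  omega

theorem aux_branch_iter (H : HubbardTree X) {x : X} (hx : IsBranchPt x) (k : ℕ) :
    IsBranchPt (H.f^[k] x) := by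
  induction k with
  | zero => exact hx
  | succ k ih =>
    rw [Function.iterate_succ_apply']
    exact le_trans ih (H.aux_arms_le (H.aux_branch_ne ih))

theorem aux_arms_mono (H : HubbardTree X) {x : X} (hx : IsBranchPt x) {i j : ℕ} (hij : i ≤ j) :
    (arms (H.f^[i] x)).ncard ≤ (arms (H.f^[j] x)).ncard := by
  induction j, hij using Nat.le_induction with
  | base => exact le_rfl
  | succ j _ ih =>
    rw [Function.iterate_succ_apply' _ j]
    exact ih.trans (H.aux_arms_le (H.aux_branch_ne (H.aux_branch_iter hx j)))

end HubbardTree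

end Aux

/-- Lemma 2.3, "The Hubbard Tree".
In every Hubbard tree: the critical value is an endpoint; the critical point has at
most two arms; every branch point is periodic or preperiodic; no iterated image of a
branch point equals the critical point; the number of arms is constant along the
periodic part of the orbit of any branch point; and every arc not containing the
critical point in its interior is mapped homeomorphically onto its image. -/
theorem critical_value_endpoint_and_branch_structure
    {X : Type*} [TopologicalSpace X] (H : HubbardTree X) :
    IsEndpoint H.c1 ∧
    (arms H.c0).ncard ≤ 2 ∧
    (∀ x : X, IsBranchPt x → ∃ k n : ℕ, 1 ≤ n ∧ H.f^[k + n] x = H.f^[k] x) ∧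
    (∀ x : X, IsBranchPt x → ∀ k : ℕ, H.f^[k] x ≠ H.c0) ∧
    (∀ x : X, IsBranchPt x → ∀ k n : ℕ, 1 ≤ n → H.f^[n] (H.f^[k] x) = H.f^[k] x →
      ∀ j : ℕ, k ≤ j → (arms (H.f^[j] x)).ncard = (arms (H.f^[k] x)).ncard) ∧
    (∀ x y : X, H.c0 ∉ H.arc x y \ {x, y} → MapsHomeoOn H.f (H.arc x y)) := by
  have := H.t2
  have := H.compact
  refine ⟨H.aux_c1_endpoint, H.aux_c0_arms, ?_, ?_, ?_, ?_⟩
  · intro x hx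
    have hni : ¬ Function.Injective (fun k : ℕ => H.f^[k] x) := by
      intro hi
      exact Set.infinite_of_injective_forall_mem hi (fun k => H.aux_branch_iter hx k)
        H.branch_finite
    have hex : ∃ i j : ℕ, i < j ∧ H.f^[i] x = H.f^[j] x := by
      simp only [Function.Injective] at hni
      push Not at hni
      obtain ⟨i, j, e, hne⟩ := hni
      rcases lt_or_gt_of_ne hne with h | h
      · exact ⟨i, j, h, e⟩
      · exact ⟨j, i, h, e.symm⟩
    obtain ⟨i, j, hij, e⟩ := hex
    refine ⟨i, j - i, by omega, ?_⟩
    rw [show i + (j - i) = j by omega]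
    exact e.symm
  · intro x hx k
    exact H.aux_branch_ne (H.aux_branch_iter hx k)
  · intro x hx k n hn hper j hkj
    apply le_antisymm _ (H.aux_arms_mono hx hkj)
    have hit : H.f^[n * j + k] x = H.f^[k] x := by
      rw [Function.iterate_add_apply, Function.iterate_mul]
      exact Function.iterate_fixed hper j
    rw [← hit]
    apply H.aux_arms_mono hx
    nlinarith
  · intro x y h
    have hi := H.aux_injOn_arc h
    have : CompactSpace (H.arc x y) := isCompact_iff_compactSpace.1 (H.aux_arc_compact x y)
    exact (Continuous.isClosedEmbedding (H.cont.comp continuous_subtype_val)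
      (Set.injOn_iff_injective.1 hi)).isEmbedding

end HubbardTrees
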